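/- arXiv:2111.06148 — 2 statements merged into one kernel-verified Lean document; each statement's English description precedes it below -/
import Mathlib

section
/- Let U : ℝ^d → ℝ have gradient ξ = ∇U thrice differentiable, with U(x) → +∞ as |x| → ∞. Let α ∈ ℝ be such that ℳ_α = {x : U(x) = α} is nonempty and ℳ_α ⊆ 𝒩^c where 𝒩 = {ξ = 0}. Fix x ∈ ℳ_α, v ∈ ℝ^d, T > 0, set r = (|x|² + |v|²)^{1/2}, and for h > 0 let z^h(t) = (φ_h)^n(x,v) for nh ≤ t < (n+1)h (n = 0,1,2,…). Then the ODE ζ'(t) = 𝐚(ζ(t)) + (0, 𝐛(ζ(t))) with ζ(0) = (x, P(x)v) has a unique solution ζ(t) = (x(t),w(t)) on [0,T], and there exist H > 0 and C > 0 such that for every 0 < h < H: sup_{0 ≤ t ≤ T} |𝐩(z^h(t)) − ζ(t)| ≤ h·C. -/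
open MeasureTheory
open scoped ENNReal RealInnerProductSpace

/-- The circle transform with angle `h` on `ℝ^d × ℝ^d`. -/
noncomputable def circleT (d : ℕ) (h : ℝ)
    (z : EuclideanSpace ℝ (Fin d) × EuclideanSpace ℝ (Fin d)) :
    EuclideanSpace ℝ (Fin d) × EuclideanSpace ℝ (Fin d) :=
  (Real.cos h • z.1 + Real.sin h • z.2, -(Real.sin h) • z.1 + Real.cos h • z.2)

/-- The normalized vector field `ξ̄(x) = ξ(x)/|ξ(x)|` (junk value `0` on `𝒩 = {ξ = 0}`). -/
noncomputable def xibar (d : ℕ) (ξ : EuclideanSpace ℝ (Fin d) → EuclideanSpace ℝ (Fin d))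
    (x : EuclideanSpace ℝ (Fin d)) : EuclideanSpace ℝ (Fin d) :=
  ‖ξ x‖⁻¹ • ξ x

open Classical in
/-- The reflection `R(x)v = v − 2(ξ̄(x)ᵀv)ξ̄(x)` for `x ∉ 𝒩`, and `R(x)v = −v` for `x ∈ 𝒩`. -/
noncomputable def reflT (d : ℕ) (ξ : EuclideanSpace ℝ (Fin d) → EuclideanSpace ℝ (Fin d))
    (x v : EuclideanSpace ℝ (Fin d)) : EuclideanSpace ℝ (Fin d) :=
  if ξ x = 0 then -v else v - (2 * ⟪xibar d ξ x, v⟫) • xibar d ξ x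

/-- The bounce transform `Φ_bounce(x,v) = (x, R(x)v)`. -/
noncomputable def bounceT (d : ℕ) (ξ : EuclideanSpace ℝ (Fin d) → EuclideanSpace ℝ (Fin d))
    (z : EuclideanSpace ℝ (Fin d) × EuclideanSpace ℝ (Fin d)) :
    EuclideanSpace ℝ (Fin d) × EuclideanSpace ℝ (Fin d) :=
  (z.1, reflT d ξ z.1 z.2)

/-- The tangential projection `P(x)v = v − (ξ̄(x)ᵀv)ξ̄(x)`. -/
noncomputable def tangP (d : ℕ) (ξ : EuclideanSpace ℝ (Fin d) → EuclideanSpace ℝ (Fin d))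
    (x v : EuclideanSpace ℝ (Fin d)) : EuclideanSpace ℝ (Fin d) :=
  v - ⟪xibar d ξ x, v⟫ • xibar d ξ x

/-- The projection `𝐩(x,v) = (x, P(x)v)`. -/
noncomputable def pbf (d : ℕ) (ξ : EuclideanSpace ℝ (Fin d) → EuclideanSpace ℝ (Fin d))
    (z : EuclideanSpace ℝ (Fin d) × EuclideanSpace ℝ (Fin d)) :
    EuclideanSpace ℝ (Fin d) × EuclideanSpace ℝ (Fin d) :=
  (z.1, tangP d ξ z.1 z.2)

/-- The level set `ℳ_α = {x : U(x) = α}`. -/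
def Mlevel (d : ℕ) (U : EuclideanSpace ℝ (Fin d) → ℝ) (α : ℝ) :
    Set (EuclideanSpace ℝ (Fin d)) :=
  {x | U x = α}

/-- The drift `𝐛(x,w) = −2(r²−|w|²−|x|²)·Dξ̄(x)ξ̄(x) − 2(wᵀDξ̄(x)w)·ξ̄(x)` of
the limit ODE. -/
noncomputable def limb (d : ℕ) (ξ : EuclideanSpace ℝ (Fin d) → EuclideanSpace ℝ (Fin d))
    (r : ℝ) (x w : EuclideanSpace ℝ (Fin d)) : EuclideanSpace ℝ (Fin d) :=
  (-2 * (r ^ 2 - ‖w‖ ^ 2 - ‖x‖ ^ 2)) • fderiv ℝ (xibar d ξ) x (xibar d ξ x)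
    + (-2 * ⟪w, fderiv ℝ (xibar d ξ) x w⟫) • xibar d ξ x

local notation "𝔼" d => EuclideanSpace ℝ (Fin d)

noncomputable def pE (d : ℕ) (η : (𝔼 d) → (𝔼 d)) (z : (𝔼 d) × (𝔼 d)) : (𝔼 d) × (𝔼 d) :=
  (z.1, z.2 - ⟪η z.1, z.2⟫ • η z.1)

noncomputable def bE (d : ℕ) (η : (𝔼 d) → (𝔼 d)) (z : (𝔼 d) × (𝔼 d)) : (𝔼 d) × (𝔼 d) :=
  (z.1, z.2 - (2 * ⟪η z.1, z.2⟫) • η z.1)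

noncomputable def stepE (d : ℕ) (η : (𝔼 d) → (𝔼 d)) (h : ℝ) (z : (𝔼 d) × (𝔼 d)) :
    (𝔼 d) × (𝔼 d) :=
  circleT d h (bE d η (circleT d h z))

noncomputable def cE (d : ℕ) (η : (𝔼 d) → (𝔼 d)) (r : ℝ) (z : (𝔼 d) × (𝔼 d)) : (𝔼 d) × (𝔼 d) :=
  ((2 : ℝ) • z.2, (-2 : ℝ) • (z.1 - ⟪η z.1, z.1⟫ • η z.1) +
    ((-2 * (r ^ 2 - ‖z.2‖ ^ 2 - ‖z.1‖ ^ 2)) • fderiv ℝ η z.1 (η z.1)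
      + (-2 * ⟪z.2, fderiv ℝ η z.1 z.2⟫) • η z.1))

/-- Second order Taylor estimate, uniform on balls. -/
lemma taylor_unif {G : Type*} [NormedAddCommGroup G] [NormedSpace ℝ G] [FiniteDimensional ℝ G]
    (Φ : ℝ × G → G) (hΦ : ContDiff ℝ 2 Φ) (R : ℝ) :
    ∃ C : ℝ, 0 ≤ C ∧ ∀ z : G, ‖z‖ ≤ R → ∀ D : G, HasDerivAt (fun h => Φ (h, z)) D 0 →
      ∀ h : ℝ, 0 ≤ h → h ≤ 1 → ‖Φ (h, z) - Φ (0, z) - h • D‖ ≤ C * h ^ 2 := by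
  have h1 : ContDiff ℝ 1 (fderiv ℝ Φ) := hΦ.fderiv_right (by norm_num)
  obtain ⟨K, hK⟩ := (h1.contDiffOn (s := Metric.closedBall (0 : ℝ × G) (max 1 R))).exists_lipschitzOnWith
    (by simp) (convex_closedBall _ _) (isCompact_closedBall _ _)
  refine ⟨K, K.2, fun z hz D hD h h0 h1 => ?_⟩
  have hder : ∀ s : ℝ, HasDerivAt (fun h => Φ (h, z)) (fderiv ℝ Φ (s, z) (1, 0)) s := by
    intro s
    have hf : HasFDerivAt Φ (fderiv ℝ Φ (s, z)) (s, z) :=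
      (hΦ.differentiable (by simp) _).hasFDerivAt
    exact hf.comp_hasDerivAt s ((hasDerivAt_id s).prodMk (hasDerivAt_const s z))
  have hDeq : D = fderiv ℝ Φ (0, z) (1, 0) := hD.unique (hder 0)
  have hmem : ∀ s : ℝ, s ∈ Set.Icc 0 h → (s, z) ∈ Metric.closedBall (0 : ℝ × G) (max 1 R) := by
    intro s hs
    simp only [Metric.mem_closedBall, dist_zero_right, Prod.norm_mk]
    exact max_le_max (by rw [Real.norm_eq_abs, abs_of_nonneg hs.1]; linarith [hs.2]) hz
  have key := Convex.norm_image_sub_le_of_norm_hasDerivWithin_le (s := Set.Icc 0 h) (x := 0) (y := h)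
    (f := fun s => Φ (s, z) - s • D) (f' := fun s => fderiv ℝ Φ (s, z) (1, 0) - D) (C := K * h)
    (fun s hs => by
      have := (hder s).sub ((hasDerivAt_id s).smul_const D)
      rw [one_smul] at this
      exact this.hasDerivWithinAt) ?_ (convex_Icc _ _) ⟨le_rfl, h0⟩ ⟨h0, le_rfl⟩
  · simp only [sub_zero, zero_smul, Real.norm_eq_abs, abs_of_nonneg h0] at key
    calc _ = ‖Φ (h, z) - h • D - Φ (0, z)‖ := by congr 1; abel
      _ ≤ _ := key.trans (by nlinarith)
  · intro s hs
    rw [hDeq, ← sub_apply]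
    have := hK.dist_le_mul _ (hmem s hs) _ (hmem 0 ⟨le_rfl, h0⟩)
    rw [dist_eq_norm, dist_eq_norm] at this
    have e : ‖((s, z) : ℝ × G) - (0, z)‖ = s := by
      simp [Prod.norm_mk, abs_of_nonneg hs.1, hs.1]
    rw [e] at this
    calc _ ≤ ‖fderiv ℝ Φ (s, z) - fderiv ℝ Φ (0, z)‖ * ‖((1 : ℝ), (0 : G))‖ :=
          ContinuousLinearMap.le_opNorm _ _
      _ = ‖fderiv ℝ Φ (s, z) - fderiv ℝ Φ (0, z)‖ := by simp [Prod.norm_mk]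
      _ ≤ K * s := this
      _ ≤ K * h := by gcongr; exact hs.2

/-- Global solutions for bounded Lipschitz vector fields. -/
lemma ode_exists {G : Type*} [NormedAddCommGroup G] [NormedSpace ℝ G] [CompleteSpace G]
    (c : G → G) (L : NNReal) (hL : LipschitzWith L c) (M : NNReal) (hM : ∀ z, ‖c z‖ ≤ M)
    (z₀ : G) (T : ℝ) (hT : 0 < T) :
    ∃ ζ : ℝ → G, ζ 0 = z₀ ∧ ∀ t ∈ Set.Icc 0 T, HasDerivAt ζ (c (ζ t)) t := by
  have h0 : (0 : ℝ) ∈ Set.Icc (-1 : ℝ) (T + 1) := ⟨by norm_num, by linarith⟩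
  have hp : IsPicardLindelof (fun _ => c) (⟨0, h0⟩ : Set.Icc (-1 : ℝ) (T + 1)) z₀
      (M * Real.toNNReal (T + 1)) 0 M L := by
    apply IsPicardLindelof.of_time_independent (fun x _ => hM x) hL.lipschitzOnWith
    have : max (T + 1 - 0) (0 - -1) = T + 1 := by
      rw [max_eq_left]; ring; linarith
    rw [this]
    simp [Real.coe_toNNReal _ (by linarith : (0:ℝ) ≤ T + 1)]
  obtain ⟨ζ, h1, h2⟩ := hp.exists_eq_forall_mem_Icc_hasDerivWithinAt₀
  refine ⟨ζ, h1, fun t ht => (h2 t ⟨by linarith [ht.1], by linarith [ht.2]⟩).hasDerivAt ?_⟩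
  exact Icc_mem_nhds (by linarith [ht.1]) (by linarith [ht.2])

/-- One-step Euler consistency for a solution. -/
lemma ode_taylor {G : Type*} [NormedAddCommGroup G] [NormedSpace ℝ G]
    (c : G → G) (L : NNReal) (hL : LipschitzWith L c) (M : NNReal) (hM : ∀ z, ‖c z‖ ≤ M)
    (ζ : ℝ → G) (T : ℝ) (hζ : ∀ t ∈ Set.Icc 0 T, HasDerivAt ζ (c (ζ t)) t) :
    (∀ s ∈ Set.Icc 0 T, ∀ t ∈ Set.Icc 0 T, ‖ζ t - ζ s‖ ≤ M * |t - s|) ∧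
    (∀ t h, 0 ≤ t → 0 ≤ h → t + h ≤ T → ‖ζ (t + h) - ζ t - h • c (ζ t)‖ ≤ L * M * h ^ 2) := by
  have A : ∀ s ∈ Set.Icc 0 T, ∀ t ∈ Set.Icc 0 T, ‖ζ t - ζ s‖ ≤ M * |t - s| := by
    intro s hs t ht
    exact Convex.norm_image_sub_le_of_norm_hasDerivWithin_le (s := Set.Icc 0 T)
      (fun u hu => (hζ u hu).hasDerivWithinAt) (fun u _ => hM _) (convex_Icc _ _) hs ht
  refine ⟨A, fun t h t0 h0 hT => ?_⟩
  have hsub : ∀ s ∈ Set.Icc t (t + h), s ∈ Set.Icc 0 T := fun s hs =>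
    ⟨t0.trans hs.1, hs.2.trans hT⟩
  have key := Convex.norm_image_sub_le_of_norm_hasDerivWithin_le (s := Set.Icc t (t + h))
    (x := t) (y := t + h)
    (f := fun s => ζ s - s • c (ζ t)) (f' := fun s => c (ζ s) - c (ζ t)) (C := L * (M * h))
    (fun s hs => by
      have := (hζ s (hsub s hs)).sub ((hasDerivAt_id s).smul_const (c (ζ t)))
      rw [one_smul] at this
      exact this.hasDerivWithinAt) ?_ (convex_Icc _ _) ⟨le_rfl, by linarith⟩
      ⟨by linarith, le_rfl⟩
  · simp only [add_sub_cancel_left, Real.norm_eq_abs, abs_of_nonneg h0] at key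
    calc _ = ‖ζ (t + h) - (t + h) • c (ζ t) - (ζ t - t • c (ζ t))‖ := by
            congr 1; rw [add_smul]; abel
      _ ≤ _ := key.trans (by nlinarith)
  · intro s hs
    have h1 := hL.dist_le_mul (ζ s) (ζ t)
    rw [dist_eq_norm, dist_eq_norm] at h1
    refine h1.trans ?_
    gcongr
    refine (A t ⟨t0, by linarith⟩ s (hsub s hs)).trans ?_
    gcongr
    rw [abs_of_nonneg (by linarith [hs.1])]; linarith [hs.2]

/-- Discrete Gronwall estimate along which a property can be propagated. -/
lemma disc_gronwall (e : ℕ → ℝ) (Q L h T : ℝ) (hQ : 0 ≤ Q) (hL : 0 ≤ L) (hh : 0 < h)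
    (he0 : e 0 ≤ 0)
    (hstep : ∀ n : ℕ, (n + 1 : ℝ) * h ≤ T → e n ≤ h * (Q * T * Real.exp (L * T)) →
      e (n + 1) ≤ (1 + L * h) * e n + Q * h ^ 2) :
    ∀ n : ℕ, (n : ℝ) * h ≤ T → e n ≤ h * (Q * T * Real.exp (L * T)) := by
  have fin : ∀ n : ℕ, (n : ℝ) * h ≤ T →
      Q * h ^ 2 * n * Real.exp (L * (n * h)) ≤ h * (Q * T * Real.exp (L * T)) := by
    intro n hn
    have hn0 : (0 : ℝ) ≤ n * h := by positivity
    calc Q * h ^ 2 * n * Real.exp (L * (n * h)) = h * (Q * (n * h) * Real.exp (L * (n * h))) := by ring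
      _ ≤ _ := by
        have : 0 ≤ Q * T := mul_nonneg hQ (hn0.trans hn)
        gcongr
  have main : ∀ n : ℕ, (n : ℝ) * h ≤ T → e n ≤ Q * h ^ 2 * n * Real.exp (L * (n * h)) := by
    intro n
    induction n with
    | zero => intro _; simpa using he0
    | succ n ih =>
      intro hn
      push_cast at hn ⊢
      have hn' : (n : ℝ) * h ≤ T := by nlinarith
      have i1 := ih hn'
      have i2 := hstep n hn (i1.trans (fin n hn'))
      have hexp : 1 + L * h ≤ Real.exp (L * h) := by linarith [Real.add_one_le_exp (L * h)]
      have hpos : 0 ≤ 1 + L * h := by positivity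
      have e1 : Real.exp (L * ((n + 1) * h)) = Real.exp (L * h) * Real.exp (L * (n * h)) := by
        rw [← Real.exp_add]; congr 1; ring
      have hge : 1 ≤ Real.exp (L * ((n + 1) * h)) := Real.one_le_exp (by positivity)
      calc e (n + 1) ≤ (1 + L * h) * e n + Q * h ^ 2 := i2
        _ ≤ (1 + L * h) * (Q * h ^ 2 * n * Real.exp (L * (n * h))) + Q * h ^ 2 := by gcongr
        _ ≤ Real.exp (L * h) * (Q * h ^ 2 * n * Real.exp (L * (n * h)))
            + Q * h ^ 2 * Real.exp (L * ((n + 1) * h)) := by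
            refine add_le_add (by gcongr) ?_
            exact le_mul_of_one_le_right (by positivity) hge
        _ = _ := by rw [e1]; ring
  exact fun n hn => (main n hn).trans (fin n hn)

lemma inner_deriv_zero (d : ℕ) (η : (𝔼 d) → (𝔼 d)) (x : 𝔼 d) (D : (𝔼 d) →L[ℝ] (𝔼 d))
    (hD : HasFDerivAt η D x) (hn : ∀ᶠ y in nhds x, ‖η y‖ = 1) (u : 𝔼 d) : ⟪η x, D u⟫ = 0 := by
  have h1 : HasFDerivAt (fun y => ‖η y‖ ^ 2) _ x := hD.norm_sq
  have h2 : HasFDerivAt (fun y => ‖η y‖ ^ 2) (0 : (𝔼 d) →L[ℝ] ℝ) x := by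
    refine (hasFDerivAt_const (1 : ℝ) x).congr_of_eventuallyEq ?_
    filter_upwards [hn] with y hy
    rw [hy]; norm_num
  have := congrArg (fun f => f u) (h1.unique h2)
  simpa using this

lemma pE_step_zero (d : ℕ) (η : (𝔼 d) → (𝔼 d)) (z : (𝔼 d) × (𝔼 d)) (hn : ‖η z.1‖ = 1) :
    pE d η (stepE d η 0 z) = pE d η z := by
  have hnn : ⟪η z.1, η z.1⟫ = 1 := by rw [real_inner_self_eq_norm_sq, hn]; norm_num
  simp only [pE, stepE, bE, circleT, Real.cos_zero, Real.sin_zero, one_smul, zero_smul, neg_zero,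
    add_zero, zero_add, Prod.mk.injEq, true_and, inner_sub_right, inner_smul_right, hnn]
  module

/-- The derivative at zero of the projected one-step map. -/
lemma hasDerivAt_step (d : ℕ) (η : (𝔼 d) → (𝔼 d)) (r : ℝ) (z : (𝔼 d) × (𝔼 d))
    (hη : DifferentiableAt ℝ η z.1) (hn : ∀ᶠ y in nhds z.1, ‖η y‖ = 1)
    (hr : ‖z.1‖ ^ 2 + ‖z.2‖ ^ 2 = r ^ 2) :
    HasDerivAt (fun h => pE d η (stepE d η h z)) (cE d η r (pE d η z)) 0 := by
  obtain ⟨x, v⟩ := z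
  simp only at hη hn hr
  have hn1 : ‖η x‖ = 1 := hn.self_of_nhds
  have hnn : ⟪η x, η x⟫ = 1 := by rw [real_inner_self_eq_norm_sq, hn1]; norm_num
  have horth : ∀ u, ⟪η x, fderiv ℝ η x u⟫ = 0 := by
    intro u
    have h1 : HasFDerivAt η (fderiv ℝ η x) x := hη.hasFDerivAt
    exact inner_deriv_zero d η x _ h1 hn u
  set n := η x with hndef
  set D := fderiv ℝ η x with hD
  have hηx : HasFDerivAt η D x := hη.hasFDerivAt
  have hcos : HasDerivAt Real.cos 0 0 := by simpa using Real.hasDerivAt_cos 0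
  have hsin : HasDerivAt Real.sin 1 0 := by simpa using Real.hasDerivAt_sin 0
  -- first circle
  have hy : HasDerivAt (fun h => Real.cos h • x + Real.sin h • v) v 0 := by
    simpa using (hcos.smul_const x).fun_add (hsin.smul_const v)
  have hu : HasDerivAt (fun h => -(Real.sin h) • x + Real.cos h • v) (-x) 0 := by
    simpa using (hsin.fun_neg.smul_const x).fun_add (hcos.smul_const v)
  set y := fun h : ℝ => Real.cos h • x + Real.sin h • v with hydef
  set u := fun h : ℝ => -(Real.sin h) • x + Real.cos h • v with hudef
  have y0 : y 0 = x := by simp [hydef]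
  have u0 : u 0 = v := by simp [hudef]
  have hηy : HasDerivAt (fun h => η (y h)) (D v) 0 := by
    have h0 : HasFDerivAt η D (y 0) := by simpa [y0] using hηx
    exact h0.comp_hasDerivAt (0:ℝ) hy
  have hq := hu.fun_sub (((hηy.inner ℝ hu).const_mul 2).fun_smul hηy)
  set q := fun h : ℝ => u h - (2 * ⟪η (y h), u h⟫) • η (y h) with hqdef
  have q0 : q 0 = v - (2 * ⟪n, v⟫) • n := by simp [hqdef, y0, u0, hndef]
  rw [y0, u0] at hq
  have hx1 : HasDerivAt (fun h => Real.cos h • y h + Real.sin h • q h) _ 0 :=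
    (hcos.fun_smul hy).fun_add (hsin.fun_smul hq)
  have hv1 : HasDerivAt (fun h => -(Real.sin h) • y h + Real.cos h • q h) _ 0 :=
    (hsin.fun_neg.fun_smul hy).fun_add (hcos.fun_smul hq)
  have hηx1 := HasFDerivAt.comp_hasDerivAt (0:ℝ) (l := η) (l' := D)
    (f := fun h => Real.cos h • y h + Real.sin h • q h) (by simpa [y0] using hηx) hx1
  have hw1 := hv1.fun_sub ((hηx1.inner ℝ hv1).fun_smul hηx1)
  have hfin := hx1.prodMk hw1
  refine hfin.congr_deriv ?_
  simp only [Function.comp, Real.cos_zero, Real.sin_zero, one_smul, zero_smul, neg_zero, add_zero,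
    zero_add, y0, q0, neg_smul, ← hndef]
  obtain ⟨w, lam, hv, hnw⟩ : ∃ (w : 𝔼 d) (lam : ℝ), v = w + lam • n ∧ ⟪n, w⟫ = 0 := by
    refine ⟨v - ⟪n, v⟫ • n, ⟪n, v⟫, by module, ?_⟩
    rw [inner_sub_right, inner_smul_right, hnn]; ring
  have hwn : ⟪w, n⟫ = 0 := by rw [real_inner_comm]; exact hnw
  have hnv : ⟪n, v⟫ = lam := by
    rw [hv, inner_add_right, inner_smul_right, hnn, hnw]; ring
  have hwv : v - lam • n = w := by rw [hv]; module
  have horth' : ∀ u, ⟪D u, n⟫ = 0 := fun u => by rw [real_inner_comm]; exact horth u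
  have hE : r ^ 2 - ‖w‖ ^ 2 - ‖x‖ ^ 2 = lam ^ 2 := by
    have : ‖v‖ ^ 2 = ‖w‖ ^ 2 + lam ^ 2 := by
      rw [← real_inner_self_eq_norm_sq, ← real_inner_self_eq_norm_sq, hv]
      simp only [inner_add_left, inner_add_right, inner_smul_left, inner_smul_right, hnn, hnw, hwn]
      simp; ring
    rw [← hr, this]; ring
  simp only [cE, pE, ← hndef, ← hD, hnv, hwv, hE]
  rw [hv]
  simp only [map_add, map_sub, map_smul, map_neg, inner_add_left, inner_add_right, inner_sub_left,
    inner_sub_right, inner_smul_left, inner_smul_right, inner_neg_left, inner_neg_right, hnn, hnw,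
    hwn, horth, horth', real_inner_comm w (D w), conj_trivial]
  refine Prod.ext ?_ ?_
  · simp only
    module
  · simp only [real_inner_comm w (D w)]
    module

lemma contDiff_pE (d : ℕ) (η : (𝔼 d) → (𝔼 d)) (hη : ContDiff ℝ 2 η) : ContDiff ℝ 2 (pE d η) := by
  unfold pE
  have h1 : ContDiff ℝ 2 (fun z : (𝔼 d) × (𝔼 d) => η z.1) := hη.comp contDiff_fst
  exact contDiff_fst.prodMk (contDiff_snd.sub ((h1.inner ℝ contDiff_snd).smul h1))

lemma contDiff_bE (d : ℕ) (η : (𝔼 d) → (𝔼 d)) (hη : ContDiff ℝ 2 η) : ContDiff ℝ 2 (bE d η) := by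
  unfold bE
  have h1 : ContDiff ℝ 2 (fun z : (𝔼 d) × (𝔼 d) => η z.1) := hη.comp contDiff_fst
  exact contDiff_fst.prodMk (contDiff_snd.sub
    ((contDiff_const.mul (h1.inner ℝ contDiff_snd)).smul h1))

lemma contDiff_circle (d : ℕ) :
    ContDiff ℝ 2 (fun p : ℝ × ((𝔼 d) × (𝔼 d)) => circleT d p.1 p.2) := by
  unfold circleT
  have hc : ContDiff ℝ 2 (fun p : ℝ × ((𝔼 d) × (𝔼 d)) => Real.cos p.1) :=
    Real.contDiff_cos.comp contDiff_fst
  have hs : ContDiff ℝ 2 (fun p : ℝ × ((𝔼 d) × (𝔼 d)) => Real.sin p.1) :=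
    Real.contDiff_sin.comp contDiff_fst
  have h1 : ContDiff ℝ 2 (fun p : ℝ × ((𝔼 d) × (𝔼 d)) => p.2.1) := contDiff_fst.comp contDiff_snd
  have h2 : ContDiff ℝ 2 (fun p : ℝ × ((𝔼 d) × (𝔼 d)) => p.2.2) := contDiff_snd.comp contDiff_snd
  exact ((hc.smul h1).add (hs.smul h2)).prodMk ((hs.neg.smul h1).add (hc.smul h2))

lemma contDiff_step (d : ℕ) (η : (𝔼 d) → (𝔼 d)) (hη : ContDiff ℝ 2 η) :
    ContDiff ℝ 2 (fun p : ℝ × ((𝔼 d) × (𝔼 d)) => pE d η (stepE d η p.1 p.2)) := by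
  unfold stepE
  have h1 := (contDiff_bE d η hη).comp (contDiff_circle d)
  have h2 := (contDiff_circle d).comp ((contDiff_fst (𝕜 := ℝ) (n := 2)).prodMk h1)
  exact (contDiff_pE d η hη).comp h2

lemma contDiff_cE (d : ℕ) (η : (𝔼 d) → (𝔼 d)) (hη : ContDiff ℝ 2 η) (r : ℝ) :
    ContDiff ℝ 1 (cE d η r) := by
  unfold cE
  have hη1 : ContDiff ℝ 1 η := hη.of_le (by norm_num)
  have h1 : ContDiff ℝ 1 (fun z : (𝔼 d) × (𝔼 d) => η z.1) := hη1.comp contDiff_fst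
  have hD : ContDiff ℝ 1 (fderiv ℝ η) := hη.fderiv_right (by norm_num)
  have hD1 : ContDiff ℝ 1 (fun z : (𝔼 d) × (𝔼 d) => fderiv ℝ η z.1) := hD.comp contDiff_fst
  have hx : ContDiff ℝ 1 (fun z : (𝔼 d) × (𝔼 d) => z.1) := contDiff_fst
  have hw : ContDiff ℝ 1 (fun z : (𝔼 d) × (𝔼 d) => z.2) := contDiff_snd
  refine ((contDiff_const (c := (2 : ℝ))).smul hw).prodMk (((contDiff_const (c := (-2 : ℝ))).smul
    (hx.sub ((h1.inner ℝ hx).smul h1))).add (ContDiff.add ?_ ?_))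
  · exact (contDiff_const.mul ((contDiff_const.sub (hw.norm_sq ℝ)).sub (hx.norm_sq ℝ))).smul
      (hD1.clm_apply h1)
  · exact (contDiff_const.mul (hw.inner ℝ (hD1.clm_apply hw))).smul h1

/-- A linear scalar ODE preserves nonnegativity. -/
lemma nonneg_of_linear (f a : ℝ → ℝ) (T : ℝ) (ha : ContinuousOn a (Set.Icc 0 T))
    (hf : ∀ t ∈ Set.Icc 0 T, HasDerivAt f (a t * f t) t) (h0 : 0 ≤ f 0) :
    ∀ t ∈ Set.Icc 0 T, 0 ≤ f t := by
  intro t ht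
  by_contra hneg
  push Not at hneg
  have hcont : ContinuousOn f (Set.Icc 0 T) := fun s hs => (hf s hs).continuousAt.continuousWithinAt
  obtain ⟨s, hs, hs0⟩ := intermediate_value_Icc' ht.1
    (hcont.mono (Set.Icc_subset_Icc_right ht.2)) ⟨hneg.le, h0⟩
  obtain ⟨M, hM⟩ := isCompact_Icc.exists_bound_of_continuousOn ha
  have hsub : Set.Icc s t ⊆ Set.Icc 0 T := Set.Icc_subset_Icc hs.1 ht.2
  have := eq_zero_of_abs_deriv_le_mul_abs_self_of_eq_zero_right (K := M) (hcont.mono hsub)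
    (fun u hu => (hf u (hsub (Set.Ico_subset_Icc_self hu))).hasDerivWithinAt) hs0
    (fun u hu => by
      rw [norm_mul]
      exact mul_le_mul_of_nonneg_right (hM u (hsub (Set.Ico_subset_Icc_self hu))) (norm_nonneg _))
    t ⟨hs.2, le_rfl⟩
  linarith

lemma ode_invariant (d : ℕ) (U : (𝔼 d) → ℝ) (ξ : (𝔼 d) → (𝔼 d))
    (hgrad : ∀ x, HasGradientAt U (ξ x) x) (η : (𝔼 d) → (𝔼 d)) (hη : ContDiff ℝ 2 η)
    (V : Set (𝔼 d)) (hV : IsOpen V) (hVη : ∀ y ∈ V, ‖η y‖ = 1 ∧ ξ y = ‖ξ y‖ • η y)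
    (α : ℝ) (hK : ∀ y, U y = α → y ∈ V) (ψ : (𝔼 d) × (𝔼 d) → ℝ) (hψ : Continuous ψ) (r T : ℝ)
    (ζ : ℝ → (𝔼 d) × (𝔼 d))
    (hζ : ∀ t ∈ Set.Icc 0 T, HasDerivAt ζ (ψ (ζ t) • cE d η r (ζ t)) t)
    (h0 : U (ζ 0).1 = α) (h0' : ⟪η (ζ 0).1, (ζ 0).2⟫ = 0)
    (h0'' : ‖(ζ 0).1‖ ^ 2 + ‖(ζ 0).2‖ ^ 2 ≤ r ^ 2) :
    ∀ t ∈ Set.Icc 0 T, U (ζ t).1 = α ∧ ‖(ζ t).1‖ ^ 2 + ‖(ζ t).2‖ ^ 2 ≤ r ^ 2 := by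
  have hcont : ContinuousOn ζ (Set.Icc 0 T) := fun s hs => (hζ s hs).continuousAt.continuousWithinAt
  have hUc : Continuous U := continuous_iff_continuousAt.2 fun y => (hgrad y).continuousAt
  have hηc := hη.continuous
  have hunit : ∀ y ∈ V, ∀ᶠ y' in nhds y, ‖η y'‖ = 1 := fun y hy => by
    filter_upwards [hV.mem_nhds hy] with y' hy'
    exact (hVη y' hy').1
  have hx : ∀ t ∈ Set.Icc 0 T, HasDerivAt (fun s => (ζ s).1) (ψ (ζ t) • (cE d η r (ζ t)).1) t :=
    fun t ht => (hζ t ht).fst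
  have hw : ∀ t ∈ Set.Icc 0 T, HasDerivAt (fun s => (ζ s).2) (ψ (ζ t) • (cE d η r (ζ t)).2) t :=
    fun t ht => (hζ t ht).snd
  -- the tangency defect has zero derivative
  have hg : ∀ t ∈ Set.Icc 0 T, (ζ t).1 ∈ V →
      HasDerivAt (fun s => ⟪η (ζ s).1, (ζ s).2⟫) 0 t := by
    intro t ht htV
    have hD : HasFDerivAt η (fderiv ℝ η (ζ t).1) (ζ t).1 :=
      (hη.differentiable (by simp) _).hasFDerivAt
    have h1 := (hD.comp_hasDerivAt t (hx t ht)).inner ℝ (hw t ht)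
    refine h1.congr_deriv ?_
    have horth := inner_deriv_zero d η _ _ hD (hunit _ htV)
    have hnn : ⟪η (ζ t).1, η (ζ t).1⟫ = 1 := by
      rw [real_inner_self_eq_norm_sq, (hVη _ htV).1]; norm_num
    simp only [Function.comp, cE, map_smul, inner_smul_left, inner_smul_right, inner_add_right,
      inner_sub_right, horth, hnn, conj_trivial, real_inner_comm (ζ t).2]
    ring
  have hUd : ∀ t ∈ Set.Icc 0 T, (ζ t).1 ∈ V → ⟪η (ζ t).1, (ζ t).2⟫ = 0 →
      HasDerivAt (fun s => U (ζ s).1) 0 t := by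
    intro t ht htV hgt
    have h1 := (hgrad (ζ t).1).hasFDerivAt.comp_hasDerivAt t (hx t ht)
    refine h1.congr_deriv ?_
    rw [(hVη _ htV).2]
    simp [cE, inner_smul_left, inner_smul_right, hgt]
  have hS : Set.Icc 0 T ⊆ {t | U (ζ t).1 = α ∧ ⟪η (ζ t).1, (ζ t).2⟫ = 0} := by
    apply IsClosed.Icc_subset_of_forall_exists_gt
    · have hc : ContinuousOn (fun t => (U (ζ t).1, ⟪η (ζ t).1, (ζ t).2⟫)) (Set.Icc 0 T) := by
        have hcc : Continuous (fun z : (𝔼 d) × (𝔼 d) => (U z.1, ⟪η z.1, z.2⟫)) := by fun_prop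
        exact hcc.comp_continuousOn hcont
      have := hc.preimage_isClosed_of_isClosed isClosed_Icc (isClosed_singleton (x := (α, (0:ℝ))))
      convert this using 1
      ext t
      simp [and_comm]
    · exact ⟨h0, h0'⟩
    · rintro t ⟨⟨htU, htg⟩, ht⟩ b hb
      have htI : t ∈ Set.Icc 0 T := Set.Ico_subset_Icc_self ht
      have hev : ∀ᶠ s in nhds t, (ζ s).1 ∈ V :=
        (hx t htI).continuousAt.eventually (hV.mem_nhds (hK _ htU))
      obtain ⟨ε, hε, hball⟩ := Metric.eventually_nhds_iff.1 hev
      set s := min (min b T) (t + ε / 2) with hs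
      have hts : t < s := lt_min (lt_min hb ht.2) (by linarith)
      have hsT : s ≤ T := (min_le_left _ _).trans (min_le_right _ _)
      have hsb : s ≤ b := (min_le_left _ _).trans (min_le_left _ _)
      have hsub : Set.Icc t s ⊆ Set.Icc 0 T := Set.Icc_subset_Icc ht.1 hsT
      have hV' : ∀ u ∈ Set.Icc t s, (ζ u).1 ∈ V := fun u hu => hball (by
        rw [Real.dist_eq, abs_of_nonneg (by linarith [hu.1])]
        linarith [hu.2, min_le_right (min b T) (t + ε / 2)])
      have hconst := constant_of_has_deriv_right_zero (a := t) (b := s)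
        (f := fun s => ⟪η (ζ s).1, (ζ s).2⟫)
        (fun u hu => (hg u (hsub hu) (hV' u hu)).continuousAt.continuousWithinAt)
        (fun u hu => (hg u (hsub (Set.Ico_subset_Icc_self hu))
          (hV' u (Set.Ico_subset_Icc_self hu))).hasDerivWithinAt)
      have hz : ∀ u ∈ Set.Icc t s, ⟪η (ζ u).1, (ζ u).2⟫ = 0 := fun u hu => by
        rw [hconst u hu]; exact htg
      have hconst2 := constant_of_has_deriv_right_zero (a := t) (b := s)
        (f := fun s => U (ζ s).1)
        (fun u hu => (hUd u (hsub hu) (hV' u hu) (hz u hu)).continuousAt.continuousWithinAt)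
        (fun u hu => (hUd u (hsub (Set.Ico_subset_Icc_self hu))
          (hV' u (Set.Ico_subset_Icc_self hu)) (hz u (Set.Ico_subset_Icc_self hu))).hasDerivWithinAt)
      refine ⟨s, ⟨?_, hz s ⟨hts.le, le_rfl⟩⟩, hts, hsb⟩
      rw [← htU]
      exact hconst2 s ⟨hts.le, le_rfl⟩
  intro t ht
  refine ⟨(hS ht).1, ?_⟩
  have hDc : Continuous (fderiv ℝ η) := hη.continuous_fderiv (by simp)
  have hac : Continuous (fun z : (𝔼 d) × (𝔼 d) => 4 * ψ z * ⟪z.2, fderiv ℝ η z.1 (η z.1)⟫) := by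
    have : Continuous (fun z : (𝔼 d) × (𝔼 d) => fderiv ℝ η z.1 (η z.1)) :=
      (hDc.comp continuous_fst).clm_apply (hηc.comp continuous_fst)
    fun_prop
  have := nonneg_of_linear (fun s => r ^ 2 - ‖(ζ s).2‖ ^ 2 - ‖(ζ s).1‖ ^ 2)
    (fun s => 4 * ψ (ζ s) * ⟪(ζ s).2, fderiv ℝ η (ζ s).1 (η (ζ s).1)⟫) T
    (hac.comp_continuousOn hcont) ?_ (by linarith) t ht
  · linarith
  · intro s hs
    have h1 := ((hw s hs).norm_sq.const_sub (r ^ 2)).fun_sub (hx s hs).norm_sq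
    refine h1.congr_deriv ?_
    have hgs := (hS hs).2
    simp only [cE, inner_smul_right, inner_add_right, inner_sub_right,
      real_inner_comm (η (ζ s).1) (ζ s).2, hgs, real_inner_comm (ζ s).1 (ζ s).2]
    ring

lemma exists_eta (d : ℕ) (ξ : (𝔼 d) → (𝔼 d)) (hξ : ContDiff ℝ 2 ξ) (b : ℝ) (hb : 0 < b) :
    ∃ η : (𝔼 d) → (𝔼 d), ContDiff ℝ 2 η ∧ ∀ y, 2 * b < ‖ξ y‖ ^ 2 → η y = xibar d ξ y := by
  refine ⟨fun y => Real.smoothTransition (‖ξ y‖ ^ 2 / b - 1) • xibar d ξ y, ?_, ?_⟩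
  · rw [contDiff_iff_contDiffAt]
    intro y
    by_cases hy : ξ y = 0
    · have hev : ∀ᶠ y' in nhds y, ‖ξ y'‖ ^ 2 < b := by
        have hc : Continuous (fun y' => ‖ξ y'‖ ^ 2) := by
          have := hξ.continuous
          fun_prop
        exact (hc.tendsto y).eventually (gt_mem_nhds (by simp [hy, hb]))
      refine (contDiffAt_const (c := (0 : 𝔼 d))).congr_of_eventuallyEq ?_
      filter_upwards [hev] with y' hy'
      rw [Real.smoothTransition.zero_of_nonpos, zero_smul]
      have : ‖ξ y'‖ ^ 2 / b < 1 := (div_lt_one hb).2 hy'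
      linarith
    · have h1 : ContDiffAt ℝ 2 ξ y := hξ.contDiffAt
      have h2 : ContDiffAt ℝ 2 (fun y => Real.smoothTransition (‖ξ y‖ ^ 2 / b - 1)) y :=
        (Real.smoothTransition.contDiff (n := 2)).contDiffAt.comp y
          (((h1.norm_sq ℝ).div_const b).sub contDiffAt_const)
      have h3 : ContDiffAt ℝ 2 (xibar d ξ) y := by
        unfold xibar
        exact ((h1.norm ℝ hy).inv (by simpa using hy)).smul h1
      exact h2.smul h3
  · intro y hy
    simp only
    rw [Real.smoothTransition.one_of_one_le, one_smul]
    have : 2 < ‖ξ y‖ ^ 2 / b := (lt_div_iff₀ hb).2 hy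
    linarith

lemma tang_norm (d : ℕ) (n v : 𝔼 d) (hn : ‖n‖ = 1) :
    ‖v - ⟪n, v⟫ • n‖ ^ 2 ≤ ‖v‖ ^ 2 ∧ ⟪n, v - ⟪n, v⟫ • n⟫ = 0 := by
  have hnn : ⟪n, n⟫ = 1 := by rw [real_inner_self_eq_norm_sq, hn]; norm_num
  constructor
  · rw [← real_inner_self_eq_norm_sq, ← real_inner_self_eq_norm_sq]
    simp only [inner_sub_left, inner_sub_right, inner_smul_left, inner_smul_right, hnn,
      conj_trivial, real_inner_comm n v]
    nlinarith [sq_nonneg ⟪n, v⟫]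
  · rw [inner_sub_right, inner_smul_right, hnn]; ring

lemma circle_sq (d : ℕ) (h : ℝ) (z : (𝔼 d) × (𝔼 d)) :
    ‖(circleT d h z).1‖ ^ 2 + ‖(circleT d h z).2‖ ^ 2 = ‖z.1‖ ^ 2 + ‖z.2‖ ^ 2 := by
  simp only [circleT, ← real_inner_self_eq_norm_sq, inner_add_left, inner_add_right,
    inner_smul_left, inner_smul_right, conj_trivial, real_inner_comm z.1 z.2]
  linear_combination (⟪z.1, z.1⟫ + ⟪z.2, z.2⟫) * Real.sin_sq_add_cos_sq h

lemma bounce_sq (d : ℕ) (ξ : (𝔼 d) → (𝔼 d)) (z : (𝔼 d) × (𝔼 d)) :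
    ‖(bounceT d ξ z).1‖ ^ 2 + ‖(bounceT d ξ z).2‖ ^ 2 = ‖z.1‖ ^ 2 + ‖z.2‖ ^ 2 := by
  simp only [bounceT, reflT]
  split_ifs with h0
  · simp
  · have hn : ‖xibar d ξ z.1‖ = 1 := by simp [xibar, norm_smul, h0]
    have hnn : ⟪xibar d ξ z.1, xibar d ξ z.1⟫ = 1 := by
      rw [real_inner_self_eq_norm_sq, hn]; norm_num
    simp only [← real_inner_self_eq_norm_sq, inner_sub_left, inner_sub_right,
      inner_smul_left, inner_smul_right, conj_trivial, hnn, real_inner_comm (xibar d ξ z.1) z.2]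
    ring

lemma circle_near (d : ℕ) (h r : ℝ) (h0 : 0 ≤ h) (h1 : h ≤ 1) (z : (𝔼 d) × (𝔼 d))
    (hz1 : ‖z.1‖ ≤ r) (hz2 : ‖z.2‖ ≤ r) : ‖(circleT d h z).1 - z.1‖ ≤ 2 * r * h := by
  have e : (circleT d h z).1 - z.1 = (Real.cos h - 1) • z.1 + Real.sin h • z.2 := by
    simp only [circleT]; module
  have hc : |Real.cos h - 1| ≤ h := by
    rw [abs_sub_comm, abs_of_nonneg (by linarith [Real.cos_le_one h])]
    nlinarith [Real.one_sub_sq_div_two_le_cos (x := h)]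
  have hs : |Real.sin h| ≤ h := by
    have := Real.abs_sin_le_abs (x := h)
    rwa [abs_of_nonneg h0] at this
  rw [e]
  calc _ ≤ ‖(Real.cos h - 1) • z.1‖ + ‖Real.sin h • z.2‖ := norm_add_le _ _
    _ = |Real.cos h - 1| * ‖z.1‖ + |Real.sin h| * ‖z.2‖ := by
        rw [norm_smul, norm_smul, Real.norm_eq_abs, Real.norm_eq_abs]
    _ ≤ h * r + h * r := by gcongr
    _ = _ := by ring

set_option maxHeartbeats 4000000 in
/-- Limit of the Weave transform: the projected discrete Weave process `𝐩(z^h(t))`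
converges, with rate `O(h)` uniformly on `[0,T]`, to the unique solution of the limit
ODE `ζ' = 𝐚(ζ) + (0, 𝐛(ζ))`, `ζ(0) = (x, P(x)v)`, with `𝐚(x,w) = 2(w, −P(x)x)`. -/
theorem stmt_14 (d : ℕ) (U : EuclideanSpace ℝ (Fin d) → ℝ)
    (ξ : EuclideanSpace ℝ (Fin d) → EuclideanSpace ℝ (Fin d))
    (hgrad : ∀ x, HasGradientAt U (ξ x) x) (hξ_C3 : ContDiff ℝ 3 ξ)
    (hcoerc : Filter.Tendsto U (Filter.cocompact (EuclideanSpace ℝ (Fin d))) Filter.atTop)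
    (α : ℝ) (hne : (Mlevel d U α).Nonempty) (hsub : Mlevel d U α ⊆ {x | ξ x ≠ 0})
    (x v : EuclideanSpace ℝ (Fin d)) (hx : x ∈ Mlevel d U α) (T : ℝ) (hT : 0 < T) :
    -- `r = |z^h(0)|`
    let r : ℝ := Real.sqrt (‖x‖ ^ 2 + ‖v‖ ^ 2)
    -- the vector field `𝐚 + (0,𝐛)` of the limit ODE
    let cvec : EuclideanSpace ℝ (Fin d) × EuclideanSpace ℝ (Fin d) →
        EuclideanSpace ℝ (Fin d) × EuclideanSpace ℝ (Fin d) := fun ζ =>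
      ((2 : ℝ) • ζ.2, (-2 : ℝ) • tangP d ξ ζ.1 ζ.1 + limb d ξ r ζ.1 ζ.2)
    -- the piecewise-constant interpolation `z^h(t) = (φ_h)^n(x,v)` for `nh ≤ t < (n+1)h`
    let zh : ℝ → ℝ → EuclideanSpace ℝ (Fin d) × EuclideanSpace ℝ (Fin d) := fun h t =>
      (fun z => circleT d h (bounceT d ξ (circleT d h z)))^[⌊t / h⌋₊] (x, v)
    ∃ ζ : ℝ → EuclideanSpace ℝ (Fin d) × EuclideanSpace ℝ (Fin d),
      -- `ζ` solves the limit ODE on `[0,T]` with initial value `(x, P(x)v)`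
      (ζ 0 = (x, tangP d ξ x v) ∧ ∀ t ∈ Set.Icc (0 : ℝ) T, HasDerivAt ζ (cvec (ζ t)) t) ∧
      -- `ζ` is the unique such solution
      (∀ ζ' : ℝ → EuclideanSpace ℝ (Fin d) × EuclideanSpace ℝ (Fin d),
        (ζ' 0 = (x, tangP d ξ x v) ∧
          ∀ t ∈ Set.Icc (0 : ℝ) T, HasDerivAt ζ' (cvec (ζ' t)) t) →
        ∀ t ∈ Set.Icc (0 : ℝ) T, ζ' t = ζ t) ∧
      -- and `sup_{0≤t≤T} |𝐩(z^h(t)) − ζ(t)| ≤ h C` for all small `h > 0`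
      ∃ H : ℝ, 0 < H ∧ ∃ C : ℝ, 0 < C ∧ ∀ h : ℝ, 0 < h → h < H →
        ∀ t ∈ Set.Icc (0 : ℝ) T, ‖pbf d ξ (zh h t) - ζ t‖ ≤ h * C := by
  intro r cvec zh
  have hr0 : 0 ≤ r := Real.sqrt_nonneg _
  have hr2 : r ^ 2 = ‖x‖ ^ 2 + ‖v‖ ^ 2 := Real.sq_sqrt (by positivity)
  have hUc : Continuous U := continuous_iff_continuousAt.2 fun y => (hgrad y).continuousAt
  -- compactness of the level set
  have hKcl : IsClosed (Mlevel d U α) := isClosed_singleton.preimage hUc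
  have hKc : IsCompact (Mlevel d U α) := by
    have hev := hcoerc.eventually_gt_atTop α
    obtain ⟨t, htc, ht⟩ := Filter.mem_cocompact.1 hev
    refine htc.of_isClosed_subset hKcl fun y hy => ?_
    by_contra hyt
    have h1 : α < U y := ht hyt
    have h2 : U y = α := hy
    linarith
  have hξc : Continuous ξ := hξ_C3.continuous
  have hsqcont : Continuous (fun y => ‖ξ y‖ ^ 2) := by fun_prop
  obtain ⟨k, hk, hkmin⟩ := hKc.exists_isMinOn hne hsqcont.continuousOn
  have hm : 0 < ‖ξ k‖ ^ 2 := by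
    have : ξ k ≠ 0 := hsub hk
    positivity
  set b := ‖ξ k‖ ^ 2 / 4 with hb
  obtain ⟨η, hη, hηeq⟩ := exists_eta d ξ (hξ_C3.of_le (by norm_num)) b (by positivity)
  set V : Set (EuclideanSpace ℝ (Fin d)) := {y | 2 * b < ‖ξ y‖ ^ 2} with hVdef
  have hV : IsOpen V := isOpen_lt continuous_const hsqcont
  have hKV : Mlevel d U α ⊆ V := fun y hy => by
    have : ‖ξ k‖ ^ 2 ≤ ‖ξ y‖ ^ 2 := hkmin hy
    show 2 * b < ‖ξ y‖ ^ 2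
    rw [hb]; linarith
  have hVne : ∀ y ∈ V, ξ y ≠ 0 := fun y hy h0 => by
    have h1 : 2 * b < ‖ξ y‖ ^ 2 := hy
    rw [h0] at h1
    have : 0 < b := by positivity
    simp at h1; linarith
  have hVη : ∀ y ∈ V, ‖η y‖ = 1 ∧ ξ y = ‖ξ y‖ • η y := fun y hy => by
    rw [hηeq y hy]
    have h0 := hVne y hy
    refine ⟨by simp [xibar, norm_smul, h0], ?_⟩
    simp [xibar, smul_smul, h0]
  have hunit : ∀ y ∈ V, ∀ᶠ y' in nhds y, ‖η y'‖ = 1 := fun y hy => by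
    filter_upwards [hV.mem_nhds hy] with y' hy'
    exact (hVη y' hy').1
  obtain ⟨δ, hδ, hδV⟩ := hKc.exists_cthickening_subset_open hV hKV
  have hnear : ∀ y y', U y = α → ‖y' - y‖ ≤ δ → y' ∈ V := fun y y' hy hd =>
    hδV (Metric.mem_cthickening_of_dist_le y' y δ _ hy (by rwa [dist_eq_norm]))
  -- the truncated vector field
  let ψ : ContDiffBump (0 : EuclideanSpace ℝ (Fin d) × EuclideanSpace ℝ (Fin d)) :=
    ⟨r + 1, r + 2, by linarith, by linarith⟩
  set c : EuclideanSpace ℝ (Fin d) × EuclideanSpace ℝ (Fin d) →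
    EuclideanSpace ℝ (Fin d) × EuclideanSpace ℝ (Fin d) := fun z => ψ z • cE d η r z with hc
  have hcC : ContDiff ℝ 1 c := ψ.contDiff.smul (contDiff_cE d η hη r)
  have hcs : HasCompactSupport c := ψ.hasCompactSupport.smul_right
  obtain ⟨L, hL⟩ := hcC.lipschitzWith_of_hasCompactSupport hcs (by simp)
  obtain ⟨M', hM'⟩ := hcs.exists_bound_of_continuous hcC.continuous
  obtain ⟨M, hM⟩ : ∃ M : NNReal, ∀ z, ‖c z‖ ≤ M :=
    ⟨M'.toNNReal, fun z => (hM' z).trans (Real.le_coe_toNNReal _)⟩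
  have hcη : ∀ z, ‖z‖ ≤ r + 1 → c z = cE d η r z := fun z hz => by
    have : ψ z = 1 := ψ.one_of_mem_closedBall (by simpa using hz)
    simp [hc, this]
  have hcv : ∀ z, z.1 ∈ V → ‖z‖ ≤ r + 1 → c z = cvec z := fun z hzV hz => by
    rw [hcη z hz]
    have hfd : fderiv ℝ η z.1 = fderiv ℝ (xibar d ξ) z.1 := by
      apply Filter.EventuallyEq.fderiv_eq
      filter_upwards [hV.mem_nhds hzV] with y hy using hηeq y hy
    simp only [cE, cvec, tangP, limb, hηeq z.1 hzV, hfd]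
  have hpbf : ∀ z, z.1 ∈ V → pbf d ξ z = pE d η z := fun z hz => by
    simp only [pbf, pE, tangP, hηeq z.1 hz]
  have hnz : ∀ z : EuclideanSpace ℝ (Fin d) × EuclideanSpace ℝ (Fin d),
      ‖z.1‖ ^ 2 + ‖z.2‖ ^ 2 ≤ r ^ 2 → ‖z.1‖ ≤ r ∧ ‖z.2‖ ≤ r ∧ ‖z‖ ≤ r := fun z hz => by
    have h1 : ‖z.1‖ ≤ r := abs_le_of_sq_le_sq' (by nlinarith [sq_nonneg ‖z.2‖]) hr0 |>.2
    have h2 : ‖z.2‖ ≤ r := abs_le_of_sq_le_sq' (by nlinarith [sq_nonneg ‖z.1‖]) hr0 |>.2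
    exact ⟨h1, h2, max_le h1 h2⟩
  have hpn : ∀ z : EuclideanSpace ℝ (Fin d) × EuclideanSpace ℝ (Fin d), z.1 ∈ V →
      ‖z.1‖ ^ 2 + ‖z.2‖ ^ 2 = r ^ 2 → ‖(pE d η z).1‖ ^ 2 + ‖(pE d η z).2‖ ^ 2 ≤ r ^ 2 :=
    fun z hz hzr => by
      have := (tang_norm d (η z.1) z.2 (hVη _ hz).1).1
      simp only [pE]
      linarith
  -- the solution
  have hxV : x ∈ V := hKV hx
  obtain ⟨ζ, hζ0, hζ⟩ := ode_exists c L hL M hM (pE d η (x, v)) T hT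
  have hinv := ode_invariant d U ξ hgrad η hη V hV hVη α (fun y hy => hKV hy) ψ ψ.continuous r T ζ
    hζ (by rw [hζ0]; exact hx) (by rw [hζ0]; exact (tang_norm d (η x) v (hVη _ hxV).1).2)
    (by rw [hζ0]; exact hpn (x, v) hxV hr2.symm)
  have hζV : ∀ t ∈ Set.Icc 0 T, (ζ t).1 ∈ V := fun t ht => hKV (hinv t ht).1
  have hζn : ∀ t ∈ Set.Icc 0 T, ‖ζ t‖ ≤ r := fun t ht => (hnz _ (hinv t ht).2).2.2
  have h0pt : ζ 0 = (x, tangP d ξ x v) := by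
    rw [hζ0, ← hpbf (x, v) hxV]; rfl
  refine ⟨ζ, ⟨h0pt, fun t ht => ?_⟩, ?_, ?_⟩
  · rw [← hcv _ (hζV t ht) (by linarith [hζn t ht])]
    exact hζ t ht
  · -- uniqueness
    rintro ζ' ⟨hζ'0, hζ'⟩
    have hcont : ContinuousOn ζ (Set.Icc 0 T) :=
      fun s hs => (hζ s hs).continuousAt.continuousWithinAt
    have hcont' : ContinuousOn ζ' (Set.Icc 0 T) :=
      fun s hs => (hζ' s hs).continuousAt.continuousWithinAt
    have hS : Set.Icc 0 T ⊆ {t | ζ' t = ζ t} := by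
      apply IsClosed.Icc_subset_of_forall_exists_gt
      · have := (hcont'.sub hcont).preimage_isClosed_of_isClosed isClosed_Icc
          (isClosed_singleton (x := (0 : EuclideanSpace ℝ (Fin d) × EuclideanSpace ℝ (Fin d))))
        convert this using 1
        ext t
        simp [and_comm, sub_eq_zero]
      · show ζ' 0 = ζ 0
        rw [hζ'0, h0pt]
      · rintro t ⟨hteq, ht⟩ y hy
        have hteq' : ζ' t = ζ t := hteq
        have htI : t ∈ Set.Icc 0 T := Set.Ico_subset_Icc_self ht
        have hO : IsOpen {z : EuclideanSpace ℝ (Fin d) × EuclideanSpace ℝ (Fin d) |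
            z.1 ∈ V ∧ ‖z‖ < r + 1} :=
          (hV.preimage continuous_fst).inter (isOpen_lt continuous_norm continuous_const)
        have hev : ∀ᶠ s in nhds t, (ζ' s).1 ∈ V ∧ ‖ζ' s‖ < r + 1 :=
          (hζ' t htI).continuousAt.eventually (hO.mem_nhds (by
            rw [hteq']; exact ⟨hζV t htI, by linarith [hζn t htI]⟩))
        obtain ⟨ε, hε, hball⟩ := Metric.eventually_nhds_iff.1 hev
        set s := min (min y T) (t + ε / 2) with hs
        have hts : t < s := lt_min (lt_min hy ht.2) (by linarith)
        have hsT : s ≤ T := (min_le_left _ _).trans (min_le_right _ _)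
        have hsb : s ≤ y := (min_le_left _ _).trans (min_le_left _ _)
        have hsub' : Set.Icc t s ⊆ Set.Icc 0 T := Set.Icc_subset_Icc ht.1 hsT
        have hloc : ∀ u ∈ Set.Icc t s, (ζ' u).1 ∈ V ∧ ‖ζ' u‖ < r + 1 := fun u hu => hball (by
          rw [Real.dist_eq, abs_of_nonneg (by linarith [hu.1])]
          linarith [hu.2, min_le_right (min y T) (t + ε / 2)])
        have huniq := ODE_solution_unique (v := fun _ => c) (f := ζ') (g := ζ) (a := t) (b := s)
          (fun _ => hL) (hcont'.mono hsub')
          (fun u hu => by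
            have hu' := Set.Ico_subset_Icc_self hu
            rw [hcv _ (hloc u hu').1 (hloc u hu').2.le]
            exact (hζ' u (hsub' hu')).hasDerivWithinAt)
          (hcont.mono hsub')
          (fun u hu => (hζ u (hsub' (Set.Ico_subset_Icc_self hu))).hasDerivWithinAt) hteq'
        exact ⟨s, huniq ⟨hts.le, le_rfl⟩, hts, hsb⟩
    exact fun t ht => hS ht
  · -- convergence
    obtain ⟨hζL, hζT⟩ := ode_taylor c L hL M hM ζ T hζ
    obtain ⟨C₁, hC₁, hTay⟩ := taylor_unif
      (fun p : ℝ × (EuclideanSpace ℝ (Fin d) × EuclideanSpace ℝ (Fin d)) =>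
        pE d η (stepE d η p.1 p.2)) (contDiff_step d η hη) r
    set Q : ℝ := C₁ + L * M with hQ
    have hQ0 : 0 ≤ Q := by positivity
    set B : ℝ := Q * T * Real.exp (L * T) with hB
    have hB0 : 0 ≤ B := by positivity
    refine ⟨min 1 (δ / (B + 2 * r + 1)), by positivity, B + M + 1, by positivity, ?_⟩
    intro h hh hhH
    have hh1 : h ≤ 1 := hhH.le.trans (min_le_left _ _)
    have hhδ : h * (B + 2 * r + 1) ≤ δ := by
      have := hhH.le.trans (min_le_right _ _)
      rwa [le_div_iff₀ (by positivity)] at this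
    set f := fun z => circleT d h (bounceT d ξ (circleT d h z)) with hf
    set z : ℕ → EuclideanSpace ℝ (Fin d) × EuclideanSpace ℝ (Fin d) := fun n => f^[n] (x, v) with hz
    have hzs : ∀ n, z (n + 1) = f (z n) := fun n => Function.iterate_succ_apply' f n (x, v)
    have hzr : ∀ n, ‖(z n).1‖ ^ 2 + ‖(z n).2‖ ^ 2 = r ^ 2 := by
      intro n
      induction n with
      | zero => exact hr2.symm
      | succ n ih => rw [hzs, hf]; simp only; rw [circle_sq, bounce_sq, circle_sq, ih]
    have hfst : ∀ (n : ℕ) (t : ℝ), ‖(z n).1 - (ζ t).1‖ ≤ ‖pE d η (z n) - ζ t‖ := fun n t =>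
      norm_fst_le (pE d η (z n) - ζ t)
    have hnhI : ∀ n : ℕ, (n : ℝ) * h ≤ T → (n : ℝ) * h ∈ Set.Icc 0 T := fun n hn =>
      ⟨by positivity, hn⟩
    have hzV : ∀ n : ℕ, (n : ℝ) * h ≤ T → ‖pE d η (z n) - ζ (n * h)‖ ≤ h * B → (z n).1 ∈ V :=
      fun n hn he => hnear _ _ (hinv _ (hnhI n hn)).1 (by
        refine (hfst n _).trans (he.trans ?_)
        nlinarith)
    have herr : ∀ n : ℕ, (n : ℝ) * h ≤ T → ‖pE d η (z n) - ζ (n * h)‖ ≤ h * B := by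
      refine disc_gronwall (fun n => ‖pE d η (z n) - ζ (n * h)‖) Q L h T hQ0 L.2 hh ?_ ?_
      · simp [hz, hζ0]
      · intro n hn he
        have hn' : (n : ℝ) * h ≤ T := by nlinarith
        have hV1 := hzV n hn' he
        obtain ⟨hz1, hz2, hz3⟩ := hnz _ (hzr n).le
        have hV2 : (circleT d h (z n)).1 ∈ V := hnear _ _ (hinv _ (hnhI n hn')).1 (by
          have a1 := circle_near d h r hh.le hh1 (z n) hz1 hz2
          have a2 := (hfst n (n * h)).trans he
          calc _ = ‖((circleT d h (z n)).1 - (z n).1) + ((z n).1 - (ζ (n * h)).1)‖ := by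
                congr 1; abel
            _ ≤ 2 * r * h + h * B := (norm_add_le _ _).trans (add_le_add a1 a2)
            _ ≤ δ := by nlinarith)
        have hstep : z (n + 1) = stepE d η h (z n) := by
          rw [hzs, hf]
          simp only [stepE, bounceT, bE, reflT, if_neg (hVne _ hV2), hηeq _ hV2]
        have t1 := hTay (z n) hz3 _ (hasDerivAt_step d η r (z n)
          (hη.differentiable (by simp) _) (hunit _ hV1) (hzr n)) h hh.le hh1
        try simp only at t1
        rw [pE_step_zero d η (z n) (hVη _ hV1).1, ← hstep,
          ← hcη _ (by linarith [(hnz _ (hpn _ hV1 (hzr n))).2.2])] at t1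
        have t2 := hζT (n * h) h (by positivity) hh.le (by linarith)
        have t3 := hL.dist_le_mul (pE d η (z n)) (ζ (n * h))
        rw [dist_eq_norm, dist_eq_norm] at t3
        have e1 : ((n + 1 : ℕ) : ℝ) * h = n * h + h := by push_cast; ring
        rw [e1]
        calc ‖pE d η (z (n + 1)) - ζ (n * h + h)‖
            = ‖(pE d η (z (n + 1)) - pE d η (z n) - h • c (pE d η (z n)))
              - (ζ (n * h + h) - ζ (n * h) - h • c (ζ (n * h)))
              + ((pE d η (z n) - ζ (n * h)) + h • (c (pE d η (z n)) - c (ζ (n * h))))‖ := by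
              congr 1; module
          _ ≤ (‖pE d η (z (n + 1)) - pE d η (z n) - h • c (pE d η (z n))‖
              + ‖ζ (n * h + h) - ζ (n * h) - h • c (ζ (n * h))‖)
              + (‖pE d η (z n) - ζ (n * h)‖ + ‖h • (c (pE d η (z n)) - c (ζ (n * h)))‖) :=
              (norm_add_le _ _).trans (add_le_add (norm_sub_le _ _) (norm_add_le _ _))
          _ ≤ (C₁ * h ^ 2 + L * M * h ^ 2) + (‖pE d η (z n) - ζ (n * h)‖
              + h * (L * ‖pE d η (z n) - ζ (n * h)‖)) := by
              rw [norm_smul h, Real.norm_eq_abs, abs_of_pos hh]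
              gcongr
          _ = _ := by rw [hQ]; ring
    intro t ht
    have hfl : (⌊t / h⌋₊ : ℝ) * h ≤ t := by
      have := Nat.floor_le (div_nonneg ht.1 hh.le)
      rwa [le_div_iff₀ hh] at this
    have hfl2 : t - (⌊t / h⌋₊ : ℝ) * h ≤ h := by
      have := (Nat.lt_floor_add_one (t / h)).le
      rw [div_le_iff₀ hh] at this
      linarith
    have hnT := hfl.trans ht.2
    have he := herr ⌊t / h⌋₊ hnT
    have hVn := hzV _ hnT he
    show ‖pbf d ξ (z ⌊t / h⌋₊) - ζ t‖ ≤ h * (B + M + 1)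
    rw [hpbf _ hVn]
    have hl := hζL t ht _ (hnhI _ hnT)
    rw [abs_sub_comm, abs_of_nonneg (by linarith)] at hl
    calc _ = ‖(pE d η (z ⌊t / h⌋₊) - ζ (⌊t / h⌋₊ * h)) + (ζ (⌊t / h⌋₊ * h) - ζ t)‖ := by
          congr 1; abel
      _ ≤ h * B + M * (t - ⌊t / h⌋₊ * h) := (norm_add_le _ _).trans (add_le_add he hl)
      _ ≤ h * B + M * h := by gcongr
      _ ≤ _ := by nlinarith
end

section
/- Fix d ∈ ℕ, h > 0, and let κ(x,v) = (x,−v) on ℝ^d × ℝ^d. Let K : ℝ^d → ℝ be differentiable with K(v) = K(−v) for all v, and let ξ : ℝ^d → ℝ^d be a Borel-measurable vector field defining the reflection R as for the bounce transform. Define the Hug transform φ_h(x,v) = (x_h, v_h) by x_{h/2} = x + (h/2)∇K(v), v_h = R(x_{h/2})v, x_h = x_{h/2} + (h/2)∇K(v_h). Then κ∘φ_h∘κ∘φ_h = id, φ_h preserves Lebesgue measure on ℝ^{2d}, and consequently φ_h is (Leb,κ)-reversible. -/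
open MeasureTheory
open scoped ENNReal RealInnerProductSpace

/-- A transform `Φ` is `μ`-reversible if `μ(A ∩ Φ⁻¹(B)) = μ(B ∩ Φ⁻¹(A))` for all
measurable `A`, `B`. -/
def MeasRev {E : Type*} [MeasurableSpace E] (μ : Measure E) (Φ : E → E) : Prop :=
  ∀ A B : Set E, MeasurableSet A → MeasurableSet B → μ (A ∩ Φ ⁻¹' B) = μ (B ∩ Φ ⁻¹' A)

/-- A transform `Φ` is `(μ,κ)`-reversible if `κ ∘ Φ` is `μ`-reversible. -/
def FlipRev {E : Type*} [MeasurableSpace E] (μ : Measure E) (κ Φ : E → E) : Prop :=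
  MeasRev μ (κ ∘ Φ)

/-- The flip `κ(x,v) = (x,-v)` on `ℝ^d × ℝ^d`. -/
def flipT (d : ℕ) (z : EuclideanSpace ℝ (Fin d) × EuclideanSpace ℝ (Fin d)) :
    EuclideanSpace ℝ (Fin d) × EuclideanSpace ℝ (Fin d) :=
  (z.1, -z.2)

/-- The Hug transform: `x_{h/2} = x + (h/2)∇K(v)`, `v_h = R(x_{h/2})v`,
`x_h = x_{h/2} + (h/2)∇K(v_h)`. -/
noncomputable def hugT (d : ℕ) (h : ℝ) (K : EuclideanSpace ℝ (Fin d) → ℝ)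
    (ξ : EuclideanSpace ℝ (Fin d) → EuclideanSpace ℝ (Fin d))
    (z : EuclideanSpace ℝ (Fin d) × EuclideanSpace ℝ (Fin d)) :
    EuclideanSpace ℝ (Fin d) × EuclideanSpace ℝ (Fin d) :=
  let xh2 := z.1 + (h / 2) • gradient K z.2
  let vh := reflT d ξ xh2 z.2
  (xh2 + (h / 2) • gradient K vh, vh)

section HugHelpers

theorem hug_grad_neg (d : ℕ) (K : EuclideanSpace ℝ (Fin d) → ℝ)
    (hK_even : ∀ v : EuclideanSpace ℝ (Fin d), K (-v) = K v) (v : EuclideanSpace ℝ (Fin d)) :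
    gradient K (-v) = -gradient K v := by
  have h2 : fderiv ℝ K v = -fderiv ℝ K (-v) := by
    have h3 := (LinearIsometryEquiv.neg ℝ
      (E := EuclideanSpace ℝ (Fin d))).toContinuousLinearEquiv.comp_right_fderiv (f := K) (x := v)
    have h4 : K ∘ (LinearIsometryEquiv.neg ℝ
      (E := EuclideanSpace ℝ (Fin d))).toContinuousLinearEquiv = K := by
      funext w; exact hK_even w
    rw [h4] at h3
    rw [h3]
    ext w
    simp
  unfold gradient
  rw [h2, map_neg, neg_neg]

theorem hug_grad_meas (d : ℕ) (K : EuclideanSpace ℝ (Fin d) → ℝ) :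
    Measurable (gradient K) := by
  unfold gradient
  exact (LinearIsometryEquiv.continuous _).measurable.comp (measurable_fderiv ℝ K)

theorem hug_refl_eq (d : ℕ) (ξ : EuclideanSpace ℝ (Fin d) → EuclideanSpace ℝ (Fin d))
    (x : EuclideanSpace ℝ (Fin d)) (hx : ξ x ≠ 0) (v : EuclideanSpace ℝ (Fin d)) :
    reflT d ξ x v = -(Submodule.reflection (Submodule.span ℝ {ξ x}) v) := by
  have hn : ‖ξ x‖ ≠ 0 := norm_ne_zero_iff.2 hx
  rw [Submodule.reflection_singleton_apply, reflT, if_neg hx, xibar, neg_sub, inner_smul_left,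
    smul_smul, two_nsmul, ← add_smul]
  congr 2
  simp
  field_simp
  ring

theorem hug_refl_neg (d : ℕ) (ξ : EuclideanSpace ℝ (Fin d) → EuclideanSpace ℝ (Fin d))
    (x v : EuclideanSpace ℝ (Fin d)) : reflT d ξ x (-v) = -reflT d ξ x v := by
  by_cases hx : ξ x = 0
  · simp [reflT, hx]
  · simp [hug_refl_eq d ξ x hx]

theorem hug_refl_refl (d : ℕ) (ξ : EuclideanSpace ℝ (Fin d) → EuclideanSpace ℝ (Fin d))
    (x v : EuclideanSpace ℝ (Fin d)) : reflT d ξ x (reflT d ξ x v) = v := by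
  by_cases hx : ξ x = 0
  · simp [reflT, hx]
  · simp [hug_refl_eq d ξ x hx]

theorem hug_refl_mp (d : ℕ) (ξ : EuclideanSpace ℝ (Fin d) → EuclideanSpace ℝ (Fin d))
    (x : EuclideanSpace ℝ (Fin d)) : MeasurePreserving (reflT d ξ x) volume volume := by
  by_cases hx : ξ x = 0
  · have : reflT d ξ x = fun v => -v := by funext v; simp [reflT, hx]
    rw [this]
    exact Measure.measurePreserving_neg volume
  · have : reflT d ξ x =
        (fun v => -v) ∘ (Submodule.reflection (Submodule.span ℝ {ξ x})) := by
      funext v; exact hug_refl_eq d ξ x hx v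
    rw [this]
    exact (Measure.measurePreserving_neg volume).comp (LinearIsometryEquiv.measurePreserving _)

theorem hug_refl_meas (d : ℕ) (ξ : EuclideanSpace ℝ (Fin d) → EuclideanSpace ℝ (Fin d))
    (hξ : Measurable ξ) : Measurable (Function.uncurry (reflT d ξ)) := by
  have hb : Measurable (xibar d ξ) := by
    unfold xibar
    exact hξ.norm.inv.smul hξ
  unfold reflT Function.uncurry
  refine Measurable.ite ?_ measurable_snd.neg ?_
  · exact (hξ.comp measurable_fst) (measurableSet_singleton 0)
  · have hb1 : Measurable (fun z : EuclideanSpace ℝ (Fin d) × EuclideanSpace ℝ (Fin d) =>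
        xibar d ξ z.1) := hb.comp measurable_fst
    exact measurable_snd.sub (((hb1.inner (𝕜 := ℝ) measurable_snd).const_mul (2 : ℝ)).smul hb1)

theorem hug_bounce_mp (d : ℕ) (ξ : EuclideanSpace ℝ (Fin d) → EuclideanSpace ℝ (Fin d))
    (hξ : Measurable ξ) : MeasurePreserving
      (fun z : EuclideanSpace ℝ (Fin d) × EuclideanSpace ℝ (Fin d) => (z.1, reflT d ξ z.1 z.2))
      volume volume :=
  (MeasurePreserving.id volume).skew_product (hug_refl_meas d ξ hξ)
    (Filter.Eventually.of_forall fun x => (hug_refl_mp d ξ x).map_eq)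

theorem hug_shear_mp (d : ℕ) (g : EuclideanSpace ℝ (Fin d) → EuclideanSpace ℝ (Fin d))
    (hg : Measurable g) : MeasurePreserving
      (fun z : EuclideanSpace ℝ (Fin d) × EuclideanSpace ℝ (Fin d) => (z.1 + g z.2, z.2))
      volume volume := by
  have h1 : MeasurePreserving
      (fun z : EuclideanSpace ℝ (Fin d) × EuclideanSpace ℝ (Fin d) => (z.1, z.2 + g z.1))
      (volume.prod volume) (volume.prod volume) :=
    (MeasurePreserving.id volume).skew_product (g := fun a b => b + g a)
      (measurable_snd.add (hg.comp measurable_fst))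
      (Filter.Eventually.of_forall fun x => (measurePreserving_add_right volume (g x)).map_eq)
  exact (Measure.measurePreserving_swap.comp h1).comp Measure.measurePreserving_swap

theorem hug_mp (d : ℕ) (h : ℝ) (K : EuclideanSpace ℝ (Fin d) → ℝ)
    (ξ : EuclideanSpace ℝ (Fin d) → EuclideanSpace ℝ (Fin d)) (hξ : Measurable ξ) :
    MeasurePreserving (hugT d h K ξ) volume volume := by
  have hs := hug_shear_mp d (fun v => (h / 2) • gradient K v) ((hug_grad_meas d K).const_smul (h / 2))
  exact (hs.comp (hug_bounce_mp d ξ hξ)).comp hs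

theorem flip_mp (d : ℕ) : MeasurePreserving (flipT d) volume volume :=
  (MeasurePreserving.id volume).prod (Measure.measurePreserving_neg volume)

end HugHelpers

/-- The Hug transform satisfies `κ∘φ_h∘κ∘φ_h = id`, preserves Lebesgue measure on
`ℝ^{2d}`, and consequently is `(Leb,κ)`-reversible. -/
theorem stmt_19 (d : ℕ) (h : ℝ) (hh : 0 < h)
    (K : EuclideanSpace ℝ (Fin d) → ℝ) (hK_diff : Differentiable ℝ K)
    (hK_even : ∀ v : EuclideanSpace ℝ (Fin d), K (-v) = K v)
    (ξ : EuclideanSpace ℝ (Fin d) → EuclideanSpace ℝ (Fin d)) (hξ_meas : Measurable ξ) :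
    (flipT d ∘ hugT d h K ξ ∘ flipT d ∘ hugT d h K ξ = id) ∧
    MeasurePreserving (hugT d h K ξ) volume volume ∧
    FlipRev (volume : Measure (EuclideanSpace ℝ (Fin d) × EuclideanSpace ℝ (Fin d)))
      (flipT d) (hugT d h K ξ) := by
  have hinv : flipT d ∘ hugT d h K ξ ∘ flipT d ∘ hugT d h K ξ = id := by
    funext ⟨x, v⟩
    simp [flipT, hugT, hug_grad_neg d K hK_even, hug_refl_neg, hug_refl_refl]
  have hmp := hug_mp d h K ξ hξ_meas
  refine ⟨hinv, hmp, ?_⟩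
  intro A B hA hB
  have hf := (flip_mp d).comp hmp
  have hi : ∀ z, (flipT d ∘ hugT d h K ξ) ((flipT d ∘ hugT d h K ξ) z) = z :=
    fun z => congrFun hinv z
  rw [← hf.measure_preimage ((hA.inter (hf.measurable hB)).nullMeasurableSet)]
  congr 1
  ext z
  simp only [Set.mem_preimage, Set.mem_inter_iff, hi]
  exact and_comm
end
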